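/- arXiv:1905.02310 — 2 statements merged into one kernel-verified Lean document; each statement's English description precedes it below -/
import Mathlib

section
/- Let (R, m) be a regular local ring of dimension two and I an m-primary ideal. Then I is a Burch ideal if and only if μ(mI) < 2μ(I), where μ denotes the minimal number of generators. -/
open IsLocalRing

/-- The minimal number of generators of an ideal. -/
noncomputable def muGen {R : Type*} [CommRing R] (I : Ideal R) : ℕ :=
  sInf {c : ℕ | ∃ s : Finset R, s.card = c ∧ Ideal.span (s : Set R) = I}

/-!
Write `m = (x, y)`. The map `(I / mI)² → mI / m²I`, `(a, b) ↦ x a + y b`, is surjective, so by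
comparing dimensions over the residue field, `μ(mI) < 2 μ(I)` says exactly that it is not injective.
Since `y, x` is a regular sequence, the Koszul relations show that its kernel consists of the
classes of `(y e, -x e)` with `e ∈ I : m`, which all vanish precisely when `m (I : m) = mI`.

That `y, x` is a regular sequence rests on the fact that a regular local ring is a domain. By prime
avoidance, in positive dimension there is `z ∈ m` outside `m²` and outside every minimal prime; then
`R / z` is regular of smaller dimension, so `(z)` is prime by induction. A minimal prime `Q ⊆ (z)`
satisfies `Q = zQ`, hence `Q = 0` by Nakayama.
-/

section RegularLocalRing

variable {R : Type*} [CommRing R]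

lemma isRegularLocalRing_of_span_eq_maximalIdeal [IsLocalRing R] [IsNoetherianRing R]
    {s : Finset R} (hs : Ideal.span (s : Set R) = maximalIdeal R)
    (hcard : (s.card : WithBot ℕ∞) ≤ ringKrullDim R) : IsRegularLocalRing R := by
  refine .of_spanFinrank_maximalIdeal_le R (le_trans ?_ hcard)
  rw [← hs, Nat.cast_le, ← Set.ncard_coe_finset]
  exact Submodule.spanFinrank_span_le_ncard_of_finite s.finite_toSet

lemma isLocalRing_quotient_span_singleton [IsLocalRing R] {z : R} (hz : z ∈ maximalIdeal R) :
    IsLocalRing (R ⧸ Ideal.span {z}) := by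
  have : Nontrivial (R ⧸ Ideal.span {z}) :=
    Ideal.Quotient.nontrivial_iff.mpr (Ideal.span_singleton_ne_top hz)
  exact .of_surjective' (Ideal.Quotient.mk _) Ideal.Quotient.mk_surjective

lemma spanFinrank_maximalIdeal_quotient_span_singleton_le [IsLocalRing R] {z : R}
    [IsLocalRing (R ⧸ Ideal.span {z})] {s : Finset R}
    (hs : Ideal.span (insert z (s : Set R)) = maximalIdeal R) :
    (maximalIdeal (R ⧸ Ideal.span {z})).spanFinrank ≤ s.card := by
  have hspan : maximalIdeal (R ⧸ Ideal.span {z}) =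
      Ideal.span (Ideal.Quotient.mk (Ideal.span {z}) '' s) := by
    rw [← map_maximalIdeal_of_surjective _ Ideal.Quotient.mk_surjective, ← hs, Ideal.map_span,
      Set.image_insert_eq, Ideal.Quotient.eq_zero_iff_mem.mpr (Ideal.mem_span_singleton_self z),
      Ideal.span_insert_zero]
  rw [hspan, ← Set.ncard_coe_finset]
  exact (Submodule.spanFinrank_span_le_ncard_of_finite (s.finite_toSet.image _)).trans
    (Set.ncard_image_le s.finite_toSet)

lemma isRegularLocalRing_quotient_span_singleton [IsLocalRing R] [IsNoetherianRing R]
    {z : R} {s : Finset R} (hs : Ideal.span (insert z (s : Set R)) = maximalIdeal R)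
    (hcard : (s.card + 1 : WithBot ℕ∞) ≤ ringKrullDim R) :
    IsRegularLocalRing (R ⧸ Ideal.span {z}) := by
  have hz : z ∈ maximalIdeal R := hs ▸ Ideal.subset_span (Set.mem_insert z _)
  have : IsLocalRing (R ⧸ Ideal.span {z}) := isLocalRing_quotient_span_singleton hz
  have hdim : ringKrullDim R ≤ ringKrullDim (R ⧸ Ideal.span {z}) + 1 :=
    maximalIdeal_height_eq_ringKrullDim (R := R) ▸ Ideal.height_le_ringKrullDim_quotient_add_one hz
  refine .of_spanFinrank_maximalIdeal_le _ (le_trans ?_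
    (ENat.WithBot.add_le_add_one_right_iff.mp (hcard.trans hdim)))
  exact_mod_cast spanFinrank_maximalIdeal_quotient_span_singleton_le hs

lemma eq_bot_of_isPrime_of_le_span_singleton [IsNoetherianRing R] {Q : Ideal R} (hQ : Q.IsPrime)
    {z : R} (hz : z ∈ Ring.jacobson R) (hQz : Q ≤ Ideal.span {z}) (hzQ : z ∉ Q) : Q = ⊥ := by
  refine Submodule.eq_bot_of_le_smul_of_le_jacobson_bot (Ideal.span {z}) Q
    (IsNoetherian.noetherian Q) (fun q hq => ?_) ?_
  · obtain ⟨r, rfl⟩ := Ideal.mem_span_singleton.mp (hQz hq)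
    exact Submodule.smul_mem_smul (Ideal.mem_span_singleton_self z)
      ((hQ.mem_or_mem hq).resolve_left hzQ)
  · rwa [Ideal.span_singleton_le_iff_mem, Ideal.jacobson_bot]

lemma isDomain_of_isPrime_span_singleton [IsNoetherianRing R] {z : R}
    (hz : z ∈ Ring.jacobson R) (hprime : (Ideal.span {z}).IsPrime)
    (hmin : ∀ Q ∈ minimalPrimes R, z ∉ Q) : IsDomain R := by
  obtain ⟨Q, hQ, hQz⟩ := Ideal.exists_minimalPrimes_le (I := ⊥) (J := Ideal.span {z}) bot_le
  have : (⊥ : Ideal R).IsPrime :=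
    eq_bot_of_isPrime_of_le_span_singleton hQ.1.1 hz hQz (hmin Q hQ) ▸ hQ.1.1
  exact .of_bot_isPrime R

lemma exists_insert_span_eq_maximalIdeal [IsLocalRing R] (hfg : (maximalIdeal R).FG) {z : R}
    (hz : z ∈ maximalIdeal R) (hz2 : z ∉ maximalIdeal R ^ 2) :
    ∃ s : Finset R, Ideal.span (insert z (s : Set R)) = maximalIdeal R ∧
      s.card + 1 = (maximalIdeal R).spanFinrank := by
  classical
  obtain ⟨t, htcard, ht⟩ := Submodule.FG.exists_span_finset_card_eq_spanFinrank hfg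
  change Ideal.span _ = _ at ht
  have hmem : ∀ i ∈ t, i ∈ maximalIdeal R := fun i hi => ht ▸ Ideal.subset_span hi
  obtain ⟨c, -, hc⟩ := Submodule.mem_span_finset.mp (ht ▸ hz : z ∈ Ideal.span (t : Set R))
  obtain ⟨i, hi, hunit⟩ : ∃ i ∈ t, IsUnit (c i) := by
    by_contra! hcon
    refine hz2 (hc ▸ sum_mem fun i hi => ?_)
    rw [pow_two]
    exact Ideal.mul_mem_mul (hcon i hi) (hmem i hi)
  have hspan : i ∈ Ideal.span (insert z (t.erase i : Set R)) := by
    rw [← Ideal.unit_mul_mem_iff_mem _ hunit]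
    have hsum : c i * i = z - ∑ j ∈ t.erase i, c j * j := by
      rw [← hc, ← Finset.add_sum_erase t _ hi, smul_eq_mul]; simp
    rw [hsum]
    refine sub_mem (Ideal.subset_span (Set.mem_insert _ _)) (sum_mem fun j hj => ?_)
    exact Ideal.mul_mem_left _ _ (Ideal.subset_span (Set.mem_insert_of_mem _ hj))
  refine ⟨t.erase i, le_antisymm ?_ ?_, ?_⟩
  · rw [Ideal.span_le, Set.insert_subset_iff]
    exact ⟨hz, fun j hj => hmem j (Finset.mem_of_mem_erase hj)⟩
  · rw [← ht, Ideal.span_le]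
    intro j hj
    by_cases hji : j = i
    · exact hji ▸ hspan
    · exact Ideal.subset_span (Set.mem_insert_of_mem _ (Finset.mem_erase.mpr ⟨hji, hj⟩))
  · rw [Finset.card_erase_add_one hi, htcard]

lemma maximalIdeal_notMem_minimalPrimes [IsLocalRing R] (hdim : ringKrullDim R ≠ 0) :
    maximalIdeal R ∉ minimalPrimes R := by
  rwa [← Ideal.height_eq_zero_iff, ← WithBot.coe_inj, maximalIdeal_height_eq_ringKrullDim]

lemma exists_mem_maximalIdeal_notMem_sq_notMem_minimalPrimes [IsLocalRing R] [IsNoetherianRing R]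
    (hdim : ringKrullDim R ≠ 0) :
    ∃ z ∈ maximalIdeal R, z ∉ maximalIdeal R ^ 2 ∧ ∀ Q ∈ minimalPrimes R, z ∉ Q := by
  have hprime : ∀ Q ∈ insert (maximalIdeal R ^ 2) (minimalPrimes R),
      Q ≠ maximalIdeal R ^ 2 → Q ≠ maximalIdeal R ^ 2 → Q.IsPrime :=
    fun Q hQ hne _ => (hQ.resolve_left hne).1.1
  by_contra! hcon
  have hcover : (maximalIdeal R : Set R) ⊆
      ⋃ Q ∈ insert (maximalIdeal R ^ 2) (minimalPrimes R), (Q : Set R) := by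
    intro z hz
    by_cases hz2 : z ∈ maximalIdeal R ^ 2
    · exact Set.mem_biUnion (Set.mem_insert _ _) hz2
    · obtain ⟨Q, hQ, hzQ⟩ := hcon z hz hz2
      exact Set.mem_biUnion (Set.mem_insert_of_mem _ hQ) hzQ
  obtain ⟨Q, rfl | hQ, hle⟩ := (Ideal.subset_union_prime_finite
    ((minimalPrimes.finite_of_isNoetherianRing R).insert _) _ _ hprime).mp hcover
  · exact (maximalIdeal_sq_lt_of_ringKrullDim_ne_zero hdim).not_ge hle
  · refine maximalIdeal_notMem_minimalPrimes hdim ?_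
    rwa [(maximalIdeal.isMaximal R).eq_of_le hQ.1.1.ne_top hle]

theorem isDomain_of_isRegularLocalRing (R : Type*) [CommRing R] [IsRegularLocalRing R] :
    IsDomain R := by
  induction hn : (maximalIdeal R).spanFinrank using Nat.strong_induction_on generalizing R with
  | h n ih =>
    by_cases hdim : ringKrullDim R = 0
    · have hbot : maximalIdeal R = ⊥ := by
        rw [← Submodule.spanFinrank_eq_zero_iff_eq_bot (maximalIdeal R).fg_of_isNoetherianRing]
        exact_mod_cast IsRegularLocalRing.spanFinrank_maximalIdeal.trans hdim
      exact (isField_iff_maximalIdeal_eq.mpr hbot).isDomain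
    obtain ⟨z, hz, hz2, hmin⟩ := exists_mem_maximalIdeal_notMem_sq_notMem_minimalPrimes hdim
    obtain ⟨s, hs, hcard⟩ :=
      exists_insert_span_eq_maximalIdeal (maximalIdeal R).fg_of_isNoetherianRing hz hz2
    have : IsRegularLocalRing (R ⧸ Ideal.span {z}) := by
      refine isRegularLocalRing_quotient_span_singleton hs (le_of_eq ?_)
      exact_mod_cast hcard ▸ IsRegularLocalRing.spanFinrank_maximalIdeal (R := R)
    have hlt : (maximalIdeal (R ⧸ Ideal.span {z})).spanFinrank < n := by
      have := spanFinrank_maximalIdeal_quotient_span_singleton_le hs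
      omega
    have hprime : (Ideal.span {z}).IsPrime :=
      (Ideal.Quotient.isDomain_iff_prime _).mp (ih _ hlt _ rfl)
    exact isDomain_of_isPrime_span_singleton (ringJacobson_eq_maximalIdeal R ▸ hz) hprime hmin

lemma isPrime_span_singleton_of_span_insert_eq_maximalIdeal [IsLocalRing R] [IsNoetherianRing R]
    {z : R} {s : Finset R} (hs : Ideal.span (insert z (s : Set R)) = maximalIdeal R)
    (hcard : (s.card + 1 : WithBot ℕ∞) ≤ ringKrullDim R) : (Ideal.span {z}).IsPrime := by
  have := isRegularLocalRing_quotient_span_singleton hs hcard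
  exact (Ideal.Quotient.isDomain_iff_prime _).mp (isDomain_of_isRegularLocalRing _)

lemma not_isPrincipal_maximalIdeal [IsLocalRing R] [IsNoetherianRing R]
    (hdim : 1 < ringKrullDim R) : ¬ (maximalIdeal R).IsPrincipal := by
  intro h
  have hle := Ideal.height_le_one_of_isPrincipal_of_mem_minimalPrimes (maximalIdeal R)
    (maximalIdeal R) (by simp [Ideal.minimalPrimes_eq_subsingleton_self])
  rw [← maximalIdeal_height_eq_ringKrullDim] at hdim
  exact hle.not_gt (by exact_mod_cast hdim)

lemma isSMulRegular_of_maximalIdeal_eq_span_pair [IsLocalRing R] [IsNoetherianRing R]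
    (hdim : ringKrullDim R = 2) {x y : R} (hm : maximalIdeal R = Ideal.span {x, y}) :
    IsSMulRegular R y ∧ IsSMulRegular (R ⧸ Ideal.span {y}) x := by
  classical
  have hnp : ¬ (maximalIdeal R).IsPrincipal := not_isPrincipal_maximalIdeal (hdim ▸ by norm_num)
  have : IsRegularLocalRing R :=
    isRegularLocalRing_of_span_eq_maximalIdeal (s := {x, y}) (by simp [hm])
      (hdim ▸ by exact_mod_cast Finset.card_le_two)
  have : IsDomain R := isDomain_of_isRegularLocalRing R
  have hy : y ≠ 0 := by
    rintro rfl
    exact hnp ⟨x, by rw [hm, Set.pair_comm, Ideal.span_insert_zero]⟩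
  have hprime : (Ideal.span {y}).IsPrime :=
    isPrime_span_singleton_of_span_insert_eq_maximalIdeal (s := {x})
      (by rw [Finset.coe_singleton, Set.pair_comm, hm]) (hdim ▸ by simp; norm_num)
  have hx : x ∉ Ideal.span {y} := fun h =>
    hnp ⟨y, by rw [hm, Ideal.span_insert, sup_eq_right.mpr]; rwa [Ideal.span_singleton_le_iff_mem]⟩
  refine ⟨.of_ne_zero hy, (isSMulRegular_quotient_iff_mem_of_smul_mem _ _).mpr fun a ha => ?_⟩
  exact (hprime.mem_or_mem ha).resolve_left hx

end RegularLocalRing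

section Fiber

variable {R : Type*} [CommRing R] {x y : R}

lemma exists_eq_mul_of_mul_add_mul_eq_zero (hy : IsSMulRegular R y)
    (hx : IsSMulRegular (R ⧸ Ideal.span {y}) x) {a b : R} (h : x * a + y * b = 0) :
    ∃ e, a = y * e ∧ b = -(x * e) := by
  have hxa : x • a ∈ Ideal.span {y} :=
    Ideal.mem_span_singleton.mpr ⟨-b, by rw [smul_eq_mul]; linear_combination h⟩
  obtain ⟨e, rfl⟩ :=
    Ideal.mem_span_singleton.mp (mem_of_isSMulRegular_quotient_of_smul_mem hx hxa)
  exact ⟨e, rfl, hy (by simp only [smul_eq_mul]; linear_combination h)⟩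

variable {J : Ideal R}

lemma mem_mul_iff_of_eq_span_pair (hJ : J = Ideal.span {x, y}) {K : Ideal R} {w : R} :
    w ∈ J * K ↔ ∃ c ∈ K, ∃ d ∈ K, x * c + y * d = w := by
  subst hJ
  simp only [Ideal.span_insert, Ideal.sup_mul, Submodule.mem_sup, Ideal.mem_span_singleton_mul,
    exists_exists_and_eq_and]

lemma mem_colon_iff_of_eq_span_pair (hJ : J = Ideal.span {x, y}) {I : Ideal R} {e : R} :
    e ∈ Submodule.colon I (J : Set R) ↔ e * x ∈ I ∧ e * y ∈ I := by
  subst hJ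
  simp [Submodule.colon_span, Submodule.mem_colon]

/-- The map `I / JI → JI / J(JI)` induced by multiplication by `x ∈ J`. The quotients are written
`N / J • ⊤`, so that they carry their `R ⧸ J`-module structure. -/
noncomputable def fiberMul (I : Ideal R) (hx : x ∈ J) :
    (I ⧸ J • (⊤ : Submodule R I)) →ₗ[R]
      (J * I : Ideal R) ⧸ J • (⊤ : Submodule R (J * I : Ideal R)) :=
  Submodule.mapQ _ _ ((LinearMap.mulLeft R x).restrict fun _ ha => Ideal.mul_mem_mul hx ha)
    (Submodule.smul_top_le_comap_smul_top J _)

/-- The map `(a, b) ↦ x a + y b` from `(I / JI)²` to `JI / J(JI)`, for `x, y ∈ J`. When `J` is the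
maximal ideal of a local ring, it compares `2 μ(I)` with `μ(JI)`. -/
noncomputable def fiberMulPair (I : Ideal R) (hx : x ∈ J) (hy : y ∈ J) :
    (I ⧸ J • (⊤ : Submodule R I)) × (I ⧸ J • (⊤ : Submodule R I)) →ₗ[R]
      (J * I : Ideal R) ⧸ J • (⊤ : Submodule R (J * I : Ideal R)) :=
  (fiberMul I hx).coprod (fiberMul I hy)

lemma mk_smul_top_eq_zero_iff {I : Ideal R} (a : I) :
    (Submodule.Quotient.mk a : I ⧸ J • (⊤ : Submodule R I)) = 0 ↔ (a : R) ∈ J * I := by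
  rw [Submodule.Quotient.mk_eq_zero, Submodule.mem_smul_top_iff, smul_eq_mul]

lemma fiberMulPair_mk {I : Ideal R} (hx : x ∈ J) (hy : y ∈ J) (a b : I) :
    fiberMulPair I hx hy (Submodule.Quotient.mk a, Submodule.Quotient.mk b) =
      Submodule.Quotient.mk ⟨x * a + y * b,
        add_mem (Ideal.mul_mem_mul hx a.2) (Ideal.mul_mem_mul hy b.2)⟩ := rfl

lemma fiberMulPair_surjective (I : Ideal R) (hx : x ∈ J) (hy : y ∈ J)
    (hJ : J = Ideal.span {x, y}) : Function.Surjective (fiberMulPair I hx hy) := by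
  intro w
  obtain ⟨⟨w, hw⟩, rfl⟩ := Submodule.Quotient.mk_surjective _ w
  obtain ⟨c, hc, d, hd, rfl⟩ := (mem_mul_iff_of_eq_span_pair hJ).mp hw
  exact ⟨(Submodule.Quotient.mk ⟨c, hc⟩, Submodule.Quotient.mk ⟨d, hd⟩), fiberMulPair_mk hx hy _ _⟩

lemma fiberMulPair_mk_eq_zero_iff {I : Ideal R} (hx : x ∈ J) (hy : y ∈ J)
    (hJ : J = Ideal.span {x, y}) (hyreg : IsSMulRegular R y)
    (hxreg : IsSMulRegular (R ⧸ Ideal.span {y}) x) (a b : I) :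
    fiberMulPair I hx hy (Submodule.Quotient.mk a, Submodule.Quotient.mk b) = 0 ↔
      ∃ e ∈ Submodule.colon I (J : Set R), ↑a - y * e ∈ J * I ∧ ↑b + x * e ∈ J * I := by
  rw [fiberMulPair_mk, mk_smul_top_eq_zero_iff]
  constructor
  · intro hab
    have hle : J * I ≤ I := Ideal.mul_le_right
    obtain ⟨c, hc, d, hd, hcd⟩ := (mem_mul_iff_of_eq_span_pair hJ).mp hab
    obtain ⟨e, hae, hbe⟩ := exists_eq_mul_of_mul_add_mul_eq_zero hyreg hxreg
      (a := a - c) (b := b - d) (by linear_combination -hcd)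
    refine ⟨e, ?_, ?_, ?_⟩
    · rw [mem_colon_iff_of_eq_span_pair hJ]
      constructor
      · convert sub_mem (hle hd) b.2 using 1
        linear_combination hbe
      · convert sub_mem a.2 (hle hc) using 1
        linear_combination -hae
    · convert hc using 1; linear_combination hae
    · convert hd using 1; linear_combination hbe
  · rintro ⟨e, -, hae, hbe⟩
    convert add_mem (Ideal.mul_mem_mul hx hae) (Ideal.mul_mem_mul hy hbe) using 1
    ring

lemma fiberMulPair_injective_iff {I : Ideal R} (hx : x ∈ J) (hy : y ∈ J)
    (hJ : J = Ideal.span {x, y}) (hyreg : IsSMulRegular R y)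
    (hxreg : IsSMulRegular (R ⧸ Ideal.span {y}) x) :
    Function.Injective (fiberMulPair I hx hy) ↔ J * I = J * Submodule.colon I (J : Set R) := by
  rw [injective_iff_map_eq_zero]
  constructor
  · intro hinj
    refine le_antisymm (Ideal.mul_mono_right Ideal.le_colon) (Ideal.mul_le.mpr fun r hr e he => ?_)
    have hex : e * x ∈ I := Submodule.mem_colon.mp he x hx
    have hey : e * y ∈ I := Submodule.mem_colon.mp he y hy
    have hzero := hinj _ ((fiberMulPair_mk_eq_zero_iff hx hy hJ hyreg hxreg ⟨e * y, hey⟩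
      ⟨-(e * x), neg_mem hex⟩).mpr ⟨e, he, by simp [mul_comm], by simp [mul_comm]⟩)
    rw [Prod.mk_eq_zero, mk_smul_top_eq_zero_iff, mk_smul_top_eq_zero_iff, neg_mem_iff] at hzero
    have : e ∈ Submodule.colon (J * I) (J : Set R) :=
      (mem_colon_iff_of_eq_span_pair hJ).mpr ⟨hzero.2, hzero.1⟩
    rw [mul_comm r e]
    exact Submodule.mem_colon.mp this r hr
  · rintro heq ⟨a, b⟩ hab
    obtain ⟨a, rfl⟩ := Submodule.Quotient.mk_surjective _ a
    obtain ⟨b, rfl⟩ := Submodule.Quotient.mk_surjective _ b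
    obtain ⟨e, he, hae, hbe⟩ := (fiberMulPair_mk_eq_zero_iff hx hy hJ hyreg hxreg a b).mp hab
    rw [Prod.mk_eq_zero, mk_smul_top_eq_zero_iff, mk_smul_top_eq_zero_iff]
    have hxe : x * e ∈ J * I := heq ▸ Ideal.mul_mem_mul hx he
    have hye : y * e ∈ J * I := heq ▸ Ideal.mul_mem_mul hy he
    exact ⟨(Submodule.sub_mem_iff_left _ hye).mp hae, (Submodule.add_mem_iff_left _ hxe).mp hbe⟩

end Fiber

lemma muGen_eq_spanFinrank {R : Type*} [CommRing R] {I : Ideal R} (hI : I.FG) :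
    muGen I = Submodule.spanFinrank I := by
  obtain ⟨s, hcard, hs⟩ := Submodule.FG.exists_span_finset_card_eq_spanFinrank hI
  refine le_antisymm (Nat.sInf_le ⟨s, hcard, hs⟩) (le_csInf ⟨_, s, hcard, hs⟩ ?_)
  rintro _ ⟨t, rfl, rfl⟩
  rw [← Set.ncard_coe_finset]
  exact Submodule.spanFinrank_span_le_ncard_of_finite t.finite_toSet

lemma finrank_lt_iff_not_injective {k V W : Type*} [Field k] [AddCommGroup V] [AddCommGroup W]
    [Module k V] [Module k W] [FiniteDimensional k V] {f : V →ₗ[k] W}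
    (hf : Function.Surjective f) :
    Module.finrank k W < Module.finrank k V ↔ ¬ Function.Injective f := by
  rw [← LinearMap.ker_eq_bot, ← Submodule.finrank_eq_zero (R := k),
    ← f.finrank_range_add_finrank_ker, LinearMap.range_eq_top.mpr hf, finrank_top]
  omega

lemma muGen_maximalIdeal_mul_lt_iff {R : Type*} [CommRing R] [IsLocalRing R] {x y : R}
    {I : Ideal R} (hI : I.FG) (hx : x ∈ maximalIdeal R) (hy : y ∈ maximalIdeal R)
    (hm : maximalIdeal R = Ideal.span {x, y}) :
    muGen (maximalIdeal R * I) < 2 * muGen I ↔ ¬ Function.Injective (fiberMulPair I hx hy) := by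
  have hmI : (maximalIdeal R * I).FG := Submodule.FG.mul (hm ▸ Submodule.fg_span (by simp)) hI
  let : Field (R ⧸ maximalIdeal R) := Ideal.Quotient.field _
  have : Module.Finite R I := Module.Finite.iff_fg.mpr hI
  have : Module.Finite (R ⧸ maximalIdeal R) (I ⧸ maximalIdeal R • (⊤ : Submodule R I)) :=
    .of_restrictScalars_finite R _ _
  rw [muGen_eq_spanFinrank hI, muGen_eq_spanFinrank hmI, spanFinrank_eq_finrank_quotient _ hI,
    spanFinrank_eq_finrank_quotient _ hmI, two_mul, ← Module.finrank_prod]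
  exact finrank_lt_iff_not_injective
    (f := (fiberMulPair I hx hy).extendScalarsOfSurjective Ideal.Quotient.mk_surjective)
    (fiberMulPair_surjective I hx hy hm)

theorem burch_iff_mu_lt_general {R : Type*} [CommRing R] [IsNoetherianRing R] [IsLocalRing R]
    (hdim : ringKrullDim R = 2)
    (hreg : ∃ x y : R, maximalIdeal R = Ideal.span {x, y}) (I : Ideal R) :
    (maximalIdeal R * I ≠ maximalIdeal R * Submodule.colon I (maximalIdeal R)) ↔
      muGen (maximalIdeal R * I) < 2 * muGen I := by
  obtain ⟨x, y, hm⟩ := hreg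
  have hx : x ∈ maximalIdeal R := hm ▸ Ideal.subset_span (by simp)
  have hy : y ∈ maximalIdeal R := hm ▸ Ideal.subset_span (by simp)
  obtain ⟨hyreg, hxreg⟩ := isSMulRegular_of_maximalIdeal_eq_span_pair hdim hm
  rw [muGen_maximalIdeal_mul_lt_iff I.fg_of_isNoetherianRing hx hy hm,
    fiberMulPair_injective_iff hx hy hm hyreg hxreg]

/-- Lemma 6.1: let `(R, m)` be a two-dimensional regular local ring and `I` an `m`-primary
ideal. Then `I` is a Burch ideal if and only if `μ(mI) < 2 μ(I)`. -/
theorem burch_iff_mu_lt {R : Type*} [CommRing R] [IsNoetherianRing R] [IsLocalRing R]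
    (hdim : ringKrullDim R = 2)
    (hreg : ∃ x y : R, maximalIdeal R = Ideal.span {x, y})
    (I : Ideal R) (hprim : I.radical = maximalIdeal R) :
    (maximalIdeal R * I ≠ maximalIdeal R * Submodule.colon I (maximalIdeal R)) ↔
      muGen (maximalIdeal R * I) < 2 * muGen I :=
  burch_iff_mu_lt_general hdim hreg I
end

section
/- Let (R, m) be a regular local ring of dimension d, x_1, …, x_d a regular system of parameters, and I a monomial ideal (in the x_i's). Then I is a Burch ideal if and only if there exist a monomial m' ∈ (I : m) and an index 1 ≤ i ≤ d such that x_i m' ∉ mI. -/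
open IsLocalRing

/-!
In a regular local ring every subset of `x` generates a prime ideal, so the `xᵢ` are nonzerodivisors
modulo any set of powers of the other ones. Hence `c * x ^ e ∈ (xᵢ ^ (eᵢ + 1))ᵢ` forces `c ∈ m`,
while a monomial ideal that misses `x ^ e` lies inside `(xᵢ ^ (eᵢ + 1))ᵢ`, and so does every other
monomial of the degree of `x ^ e`. Therefore a monomial ideal `I` contains each monomial occurring
in the leading form of any of its elements. This property passes to `(I : m)` and, by Krull's
intersection theorem, characterizes monomial ideals. So `(I : m)` is monomial, and
`m (I : m) ≤ m I` can be tested on the products of the `xᵢ` with the monomials of `(I : m)`.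
-/

section KrullDimension

variable {R : Type*} [CommRing R]

theorem exists_isPrime_ringKrullDim_quotient_eq (J : Ideal R) [FiniteRingKrullDim (R ⧸ J)] :
    ∃ q : Ideal R, q.IsPrime ∧ J ≤ q ∧ ringKrullDim (R ⧸ q) = ringKrullDim (R ⧸ J) := by
  have : FiniteDimensionalOrder (PrimeSpectrum.zeroLocus (J : Set R)) := by
    rw [Order.finiteDimensionalOrder_iff_krullDim_ne_bot_and_top, ← ringKrullDim_quotient]
    exact ⟨ringKrullDim_ne_bot, ringKrullDim_ne_top⟩
  let longest := LTSeries.longestOf (PrimeSpectrum.zeroLocus (J : Set R))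
  let q := longest.head.1.asIdeal
  have hJq : J ≤ q := longest.head.2
  let chain : LTSeries (PrimeSpectrum.zeroLocus (q : Set R)) :=
    { length := longest.length
      toFun := fun i => ⟨longest i, longest.head_le i⟩
      step := fun i => longest.step i }
  refine ⟨q, longest.head.1.isPrime, hJq, le_antisymm
    (ringKrullDim_le_of_surjective _ (Ideal.Quotient.factor_surjective hJq)) ?_⟩
  rw [ringKrullDim_quotient, ringKrullDim_quotient,
    Order.krullDim_eq_length_of_finiteDimensionalOrder]
  exact Order.LTSeries.length_le_krullDim chain

theorem ringKrullDim_quotient_le_quotient_sup_span_add_encard [IsNoetherianRing R] (J : Ideal R)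
    {s : Set R} (hs : s ⊆ Ring.jacobson R) :
    ringKrullDim (R ⧸ J) ≤ ringKrullDim (R ⧸ J ⊔ Ideal.span s) + s.encard := by
  have hs_image : Ideal.Quotient.mk J '' s ⊆ Ring.jacobson (R ⧸ J) := by
    rintro _ ⟨r, hr, rfl⟩
    exact Ring.le_comap_jacobson (Ideal.Quotient.mk J) (hs hr)
  refine (ringKrullDim_le_ringKrullDim_quotient_add_encard _ hs_image).trans ?_
  rw [← Ideal.map_span,
    ringKrullDim_eq_of_ringEquiv (DoubleQuot.quotQuotEquivQuotSup J (Ideal.span s))]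
  gcongr
  exact_mod_cast Set.encard_image_le _ _

-- A prime `q ⊇ J` with `dim R/q = dim R/J` misses `a`, and the drop in dimension forces
-- `q ≤ J + (a)`. Hence `q = J + a q`, and Nakayama's lemma gives `q = J`.
theorem isPrime_of_isPrime_sup_span_singleton [IsNoetherianRing R] {J : Ideal R}
    [FiniteRingKrullDim (R ⧸ J)] {a : R} (ha : a ∈ Ring.jacobson R)
    [hP : (J ⊔ Ideal.span {a}).IsPrime]
    (hdim : ringKrullDim (R ⧸ J ⊔ Ideal.span {a}) < ringKrullDim (R ⧸ J)) : J.IsPrime := by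
  obtain ⟨q, hq, hJq, hq_dim⟩ := exists_isPrime_ringKrullDim_quotient_eq J
  rw [← hq_dim] at hdim
  have haq : a ∉ q := fun h => hdim.not_ge <| ringKrullDim_le_of_surjective _ <|
    Ideal.Quotient.factor_surjective <| sup_le hJq <| (Ideal.span_singleton_le_iff_mem q).mpr h
  have hqP : q ≤ J ⊔ Ideal.span {a} := by
    by_contra hle
    obtain ⟨b, hbq, hbP⟩ := SetLike.not_le_iff_exists.mp hle
    have hlower : ringKrullDim (R ⧸ q ⊔ Ideal.span {a}) + 1 ≤
        ringKrullDim (R ⧸ J ⊔ Ideal.span {a}) :=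
      ringKrullDim_succ_le_of_surjective _
        (Ideal.Quotient.factor_surjective (sup_le_sup_right hJq _))
        (mem_nonZeroDivisors_of_ne_zero (Ideal.Quotient.eq_zero_iff_mem.not.mpr hbP))
        (Ideal.Quotient.eq_zero_iff_mem.mpr (Ideal.mem_sup_left hbq))
    have hupper := ringKrullDim_quotient_le_quotient_sup_span_add_encard q
      (Set.singleton_subset_iff.mpr ha)
    rw [Set.encard_singleton] at hupper
    exact (hlower.trans_lt hdim).not_ge hupper
  have hqJ : q ≤ J ⊔ Ring.jacobson R • q := fun r hr => by
    obtain ⟨j, hj, _, hs, rfl⟩ := Submodule.mem_sup.mp (hqP hr)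
    obtain ⟨s, rfl⟩ := Ideal.mem_span_singleton.mp hs
    have hsq : s ∈ q :=
      (hq.mem_or_mem ((q.add_mem_iff_right (hJq hj)).mp hr)).resolve_left haq
    exact Submodule.add_mem_sup hj (Submodule.smul_mem_smul ha hsq)
  have hJ : J = q := hJq.antisymm <| Submodule.le_of_le_smul_of_le_jacobson_bot
    (IsNoetherian.noetherian q) Ideal.jacobson_bot.ge hqJ
  exact hJ ▸ hq

end KrullDimension

theorem le_of_forall_le_sup_pow {R : Type*} [CommRing R] [IsNoetherianRing R] {J K m : Ideal R}
    (hm : m ≤ Ring.jacobson R) (h : ∀ n, K ≤ J ⊔ m ^ n) : K ≤ J := by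
  intro f hf
  have := IsHausdorff.of_le_jacobson m (R ⧸ J) (hm.trans Ideal.jacobson_bot.ge)
  refine Ideal.Quotient.eq_zero_iff_mem.mp (IsHausdorff.haus this _ fun n => ?_)
  obtain ⟨j, hj, g, hg, rfl⟩ := Submodule.mem_sup.mp (h n hf)
  rw [SModEq.zero, map_add, Ideal.Quotient.eq_zero_iff_mem.mpr hj, zero_add,
    ← mul_one (Ideal.Quotient.mk J g)]
  exact Submodule.smul_mem_smul hg (Submodule.mem_top (x := (1 : R ⧸ J)))

section RegularElements

variable {R : Type*} [CommRing R] {J : Ideal R} {r s : R}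

theorem mem_sup_span_singleton_of_mul_pow_mem (hs : IsSMulRegular (R ⧸ J) s) {c : R} {n : ℕ}
    (h : c * s ^ n ∈ J ⊔ Ideal.span {s ^ (n + 1)}) : c ∈ J ⊔ Ideal.span {s} := by
  obtain ⟨j, hj, _, hw, hsum⟩ := Submodule.mem_sup.mp h
  obtain ⟨w, rfl⟩ := Ideal.mem_span_singleton.mp hw
  have hcancel : s ^ n • (c - s * w) ∈ J := by
    convert hj using 1
    rw [smul_eq_mul]
    linear_combination -hsum
  rw [← sub_add_cancel c (s * w)]
  exact Submodule.add_mem_sup (mem_of_isSMulRegular_quotient_of_smul_mem (hs.pow n) hcancel)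
    (Ideal.mul_mem_right w _ (Ideal.mem_span_singleton_self s))

theorem isSMulRegular_quotient_sup_span_pow (hs : IsSMulRegular (R ⧸ J) s)
    (hr : IsSMulRegular (R ⧸ J ⊔ Ideal.span {s}) r) (n : ℕ) :
    IsSMulRegular (R ⧸ J ⊔ Ideal.span {s ^ n}) r := by
  rw [isSMulRegular_quotient_iff_mem_of_smul_mem]
  induction n with
  | zero => simp
  | succ n ih =>
    intro z hz
    have hpow : Ideal.span {s ^ (n + 1)} ≤ Ideal.span {s ^ n} :=
      Ideal.span_singleton_le_span_singleton.mpr (pow_dvd_pow s n.le_succ)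
    obtain ⟨j, hj, _, hw, rfl⟩ := Submodule.mem_sup.mp (ih z (sup_le_sup_left hpow J hz))
    obtain ⟨w, rfl⟩ := Ideal.mem_span_singleton.mp hw
    have hrw : r * w * s ^ n ∈ J ⊔ Ideal.span {s ^ (n + 1)} := by
      convert sub_mem hz (Ideal.mem_sup_left (J.mul_mem_left r hj)) using 1
      rw [smul_eq_mul]
      ring
    have hw : w ∈ J ⊔ Ideal.span {s} := mem_of_isSMulRegular_quotient_of_smul_mem hr
      (mem_sup_span_singleton_of_mul_pow_mem hs hrw)
    obtain ⟨k, hk, _, hv, rfl⟩ := Submodule.mem_sup.mp hw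
    obtain ⟨v, rfl⟩ := Ideal.mem_span_singleton.mp hv
    refine Submodule.mem_sup.mpr ⟨j + s ^ n * k, J.add_mem hj (J.mul_mem_left _ hk),
      s ^ (n + 1) * v, Ideal.mul_mem_right v _ (Ideal.mem_span_singleton_self _), ?_⟩
    ring

end RegularElements

/-- A family that is a weakly regular sequence in every order: each `xᵢ` is a nonzerodivisor modulo
any set of other members. -/
def IsPermutablyRegular {R ι : Type*} [CommRing R] (x : ι → R) : Prop :=
  ∀ (S : Set ι) (i : ι), i ∉ S → IsSMulRegular (R ⧸ Ideal.span (x '' S)) (x i)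

namespace IsPermutablyRegular

variable {R ι : Type*} [CommRing R] {x : ι → R}

theorem isSMulRegular_quotient_sup_span_image_pow (hx : IsPermutablyRegular x) (a : ι → ℕ)
    (T : Finset ι) {S : Set ι} (hST : Disjoint S T) {i : ι} (hiS : i ∉ S) (hiT : i ∉ T) :
    IsSMulRegular
      (R ⧸ Ideal.span (x '' S) ⊔ Ideal.span ((fun j => x j ^ a j) '' T)) (x i) := by
  classical
  induction T using Finset.induction_on generalizing S i with
  | empty =>
    rw [Finset.coe_empty, Set.image_empty, Ideal.span_empty, sup_bot_eq]
    exact hx S i hiS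
  | insert j T hjT ih =>
    rw [Finset.coe_insert, Set.disjoint_insert_right] at hST
    rw [Finset.mem_insert, not_or] at hiT
    have hj := ih hST.2 hST.1 hjT
    have hi : IsSMulRegular (R ⧸ Ideal.span (x '' insert j S) ⊔
        Ideal.span ((fun j => x j ^ a j) '' T)) (x i) :=
      ih (Set.disjoint_insert_left.mpr ⟨by simpa using hjT, hST.2⟩)
        (by simp [hiT.1, hiS]) hiT.2
    rw [Set.image_insert_eq, Ideal.span_insert, sup_assoc, sup_comm] at hi
    rw [Finset.coe_insert, Set.image_insert_eq, Ideal.span_insert, sup_left_comm, sup_comm]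
    exact isSMulRegular_quotient_sup_span_pow hj hi (a j)

theorem mem_span_image_of_mul_prod_pow_mem (hx : IsPermutablyRegular x) (e : ι → ℕ)
    (T : Finset ι) {S : Set ι} (hST : Disjoint S T) {c : R}
    (hc : c * ∏ i ∈ T, x i ^ e i ∈
      Ideal.span (x '' S) ⊔ Ideal.span ((fun i => x i ^ (e i + 1)) '' T)) :
    c ∈ Ideal.span (x '' (S ∪ T)) := by
  classical
  induction T using Finset.induction_on generalizing S with
  | empty => simpa using hc
  | insert j T hjT ih =>
    rw [Finset.coe_insert, Set.disjoint_insert_right] at hST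
    rw [Finset.coe_insert, Set.image_insert_eq, Ideal.span_insert, sup_left_comm, sup_comm,
      Finset.prod_insert hjT, mul_comm (x j ^ e j), ← mul_assoc] at hc
    have hj := hx.isSMulRegular_quotient_sup_span_image_pow (fun i => e i + 1) T hST.2 hST.1 hjT
    have hdrop := mem_sup_span_singleton_of_mul_pow_mem hj hc
    rw [sup_comm, ← sup_assoc, ← Ideal.span_insert, ← Set.image_insert_eq] at hdrop
    rw [Finset.coe_insert, Set.union_insert, ← Set.insert_union]
    exact ih (Set.disjoint_insert_left.mpr ⟨by simpa using hjT, hST.2⟩) hdrop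

end IsPermutablyRegular

/-- A regular system of parameters of a local ring: a family of `dim R` generators of the maximal
ideal. For Noetherian `R`, its existence says that `R` is regular. -/
structure IsRegularSystemOfParameters {R ι : Type*} [CommRing R] [IsLocalRing R] (x : ι → R) :
    Prop where
  span_range : Ideal.span (Set.range x) = maximalIdeal R
  ringKrullDim_eq : ringKrullDim R = Nat.card ι

namespace IsRegularSystemOfParameters

variable {R ι : Type*} [CommRing R] [IsLocalRing R] {x : ι → R}

theorem mem_maximalIdeal (hx : IsRegularSystemOfParameters x) (i : ι) : x i ∈ maximalIdeal R :=
  hx.span_range ▸ Ideal.subset_span (Set.mem_range_self i)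

theorem image_subset_jacobson (hx : IsRegularSystemOfParameters x) (S : Set ι) :
    x '' S ⊆ Ring.jacobson R := by
  rw [ringJacobson_eq_maximalIdeal]
  rintro _ ⟨i, -, rfl⟩
  exact hx.mem_maximalIdeal i

theorem nontrivial_quotient (hx : IsRegularSystemOfParameters x) (S : Set ι) :
    Nontrivial (R ⧸ Ideal.span (x '' S)) :=
  Ideal.Quotient.nontrivial_iff.mpr <| ne_top_of_le_ne_top (maximalIdeal.isMaximal R).ne_top <|
    hx.span_range ▸ Ideal.span_mono (Set.image_subset_range x S)

variable [IsNoetherianRing R] [Finite ι]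

theorem ringKrullDim_quotient_span_image (hx : IsRegularSystemOfParameters x) (S : Set ι) :
    ringKrullDim (R ⧸ Ideal.span (x '' S)) = Sᶜ.ncard := by
  have hbound (T : Set ι) : ((x '' T).encard : WithBot ℕ∞) ≤ T.ncard := by
    rw [← WithBot.coe_natCast, T.toFinite.cast_ncard_eq]
    exact_mod_cast Set.encard_image_le x T
  have hfield : ringKrullDim (R ⧸ Ideal.span (x '' S) ⊔ Ideal.span (x '' Sᶜ)) = 0 := by
    rw [← Ideal.span_union, ← Set.image_union, Set.union_compl_self, Set.image_univ,
      hx.span_range]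
    exact ringKrullDim_eq_zero_of_field (ResidueField R)
  refine le_antisymm ?_ ?_
  · grw [ringKrullDim_quotient_le_quotient_sup_span_add_encard _ (hx.image_subset_jacobson Sᶜ),
      hfield, zero_add, hbound]
  · have hdim := ringKrullDim_le_ringKrullDim_quotient_add_encard _ (hx.image_subset_jacobson S)
    grw [hx.ringKrullDim_eq, ← Set.ncard_add_ncard_compl S, hbound, Nat.cast_add, add_comm] at hdim
    exact ENat.WithBot.add_le_add_natCast_right_iff.mp hdim

theorem ringKrullDim_quotient_span_image_insert_lt (hx : IsRegularSystemOfParameters x)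
    {S : Set ι} {i : ι} (hi : i ∉ S) :
    ringKrullDim (R ⧸ Ideal.span (x '' insert i S)) < ringKrullDim (R ⧸ Ideal.span (x '' S)) := by
  rw [hx.ringKrullDim_quotient_span_image, hx.ringKrullDim_quotient_span_image]
  exact_mod_cast Set.ncard_lt_ncard (compl_lt_compl_iff_lt.mpr (Set.ssubset_insert hi))

theorem isPrime_span_image (hx : IsRegularSystemOfParameters x) (S : Set ι) :
    (Ideal.span (x '' S)).IsPrime := by
  induction S using WellFoundedGT.induction with
  | ind S ih =>
  by_cases hS : S = Set.univ
  · rw [hS, Set.image_univ, hx.span_range]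
    infer_instance
  obtain ⟨i, hi⟩ := (Set.ne_univ_iff_exists_notMem S).mp hS
  have := hx.nontrivial_quotient S
  have : IsLocalRing (R ⧸ Ideal.span (x '' S)) :=
    .of_surjective' _ Ideal.Quotient.mk_surjective
  have hinsert : Ideal.span (x '' insert i S) = Ideal.span (x '' S) ⊔ Ideal.span {x i} := by
    rw [Set.image_insert_eq, Ideal.span_insert, sup_comm]
  have hprime := ih (insert i S) (Set.ssubset_insert hi)
  have hlt := hx.ringKrullDim_quotient_span_image_insert_lt hi
  rw [hinsert] at hprime hlt
  exact isPrime_of_isPrime_sup_span_singleton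
    (hx.image_subset_jacobson {i} (Set.mem_image_of_mem x rfl)) hlt

theorem notMem_span_image (hx : IsRegularSystemOfParameters x) {S : Set ι} {i : ι}
    (hi : i ∉ S) : x i ∉ Ideal.span (x '' S) := fun hmem => by
  have hlt := hx.ringKrullDim_quotient_span_image_insert_lt hi
  rw [Set.image_insert_eq, Ideal.span_insert,
    sup_eq_right.mpr ((Ideal.span_singleton_le_iff_mem _).mpr hmem)] at hlt
  exact hlt.false

theorem isPermutablyRegular (hx : IsRegularSystemOfParameters x) : IsPermutablyRegular x :=
  fun S _ hi => (isSMulRegular_quotient_iff_mem_of_smul_mem _ _).mpr fun _ hr =>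
    ((hx.isPrime_span_image S).mem_or_mem hr).resolve_left (hx.notMem_span_image hi)

end IsRegularSystemOfParameters

theorem degree_eq_of_isHomogeneous_of_coeff_ne_zero {R ι : Type*} [CommSemiring R]
    {p : MvPolynomial ι R} {n : ℕ} (hp : p.IsHomogeneous n) {e : ι →₀ ℕ} (he : p.coeff e ≠ 0) :
    e.degree = n := by
  rw [Finsupp.degree_eq_weight_one]
  exact hp he

section MonomialIdeal

variable {R ι : Type*} [CommRing R] [Fintype ι]

/-- The ideal `(x₁ ^ (e₁ + 1), …, x_d ^ (e_d + 1))`. It contains every monomial in the `xᵢ` whose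
exponent is not bounded by `e`, and serves to separate `x ^ e` from these. -/
def powSuccIdeal (x : ι → R) (e : ι → ℕ) : Ideal R :=
  Ideal.span (Set.range fun i => x i ^ (e i + 1))

/-- A monomial ideal with respect to the family `x`: an ideal generated by products of powers of
the `xᵢ`. -/
def IsMonomialIdeal (x : ι → R) (I : Ideal R) : Prop :=
  ∃ E : Set (ι → ℕ), I = Ideal.span ((fun e => ∏ i, x i ^ e i) '' E)

/-- The ideal `I` contains all monomials that occur in leading forms of its elements. Leading forms
have coefficients in `R / (x)`; they are encoded here by homogeneous polynomials over `R`, a term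
being counted when its coefficient lies outside `(x)`. -/
def ContainsLeadingMonomials (x : ι → R) (I : Ideal R) : Prop :=
  ∀ (n : ℕ) (p : MvPolynomial ι R), p.IsHomogeneous n → MvPolynomial.eval x p ∈ I →
    ∀ e, p.coeff e ∉ Ideal.span (Set.range x) → ∏ i, x i ^ e i ∈ I

variable {x : ι → R} {I : Ideal R}

theorem prod_pow_mem_powSuccIdeal (x : ι → R) {e f : ι → ℕ} (h : ¬ f ≤ e) :
    ∏ i, x i ^ f i ∈ powSuccIdeal x e := by
  obtain ⟨i, hi⟩ := not_forall.mp h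
  refine Ideal.mem_of_dvd _ ?_ (Ideal.subset_span (Set.mem_range_self i))
  exact (pow_dvd_pow (x i) (not_le.mp hi)).trans
    (Finset.dvd_prod_of_mem (fun i => x i ^ f i) (Finset.mem_univ i))

theorem IsMonomialIdeal.le_powSuccIdeal (hI : IsMonomialIdeal x I) {e : ι → ℕ}
    (he : ∏ i, x i ^ e i ∉ I) : I ≤ powSuccIdeal x e := by
  obtain ⟨E, rfl⟩ := hI
  rw [Ideal.span_le]
  rintro _ ⟨f, hf, rfl⟩
  refine prod_pow_mem_powSuccIdeal x fun hfe => he ?_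
  exact Ideal.mem_of_dvd _ (Finset.prod_dvd_prod_of_dvd _ _ fun i _ => pow_dvd_pow (x i) (hfe i))
    (Ideal.subset_span (Set.mem_image_of_mem _ hf))

theorem IsPermutablyRegular.mem_span_range_of_mul_mem_powSuccIdeal (hx : IsPermutablyRegular x)
    {e : ι → ℕ} {c : R} (hc : c * ∏ i, x i ^ e i ∈ powSuccIdeal x e) :
    c ∈ Ideal.span (Set.range x) := by
  have h := hx.mem_span_image_of_mul_prod_pow_mem e Finset.univ (S := ∅) (c := c)
    (Set.empty_disjoint _)
  simp only [Set.image_empty, Ideal.span_empty, bot_sup_eq, Finset.coe_univ, Set.image_univ,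
    Set.empty_union] at h
  exact h hc

theorem eval_sub_coeff_mul_prod_pow_mem_powSuccIdeal (x : ι → R) {p : MvPolynomial ι R} {n : ℕ}
    (hp : p.IsHomogeneous n) {e : ι →₀ ℕ} (he : p.coeff e ≠ 0) :
    MvPolynomial.eval x p - p.coeff e * ∏ i, x i ^ e i ∈ powSuccIdeal x e := by
  classical
  rw [MvPolynomial.eval_eq', ← Finset.sum_erase_eq_sub (MvPolynomial.mem_support_iff.mpr he)]
  refine sum_mem fun f hf => Ideal.mul_mem_left _ _ (prod_pow_mem_powSuccIdeal x fun hfe => ?_)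
  obtain ⟨hf_ne, hf_mem⟩ := Finset.mem_erase.mp hf
  obtain ⟨g, rfl⟩ := exists_add_of_le (show f ≤ e from hfe)
  have hdeg : (f + g).degree = f.degree :=
    (degree_eq_of_isHomogeneous_of_coeff_ne_zero hp he).trans
      (degree_eq_of_isHomogeneous_of_coeff_ne_zero hp
        (MvPolynomial.mem_support_iff.mp hf_mem)).symm
  have hg : g = 0 := by
    rwa [map_add, Nat.add_eq_left, Finsupp.degree_eq_zero_iff] at hdeg
  exact hf_ne (by rw [hg, add_zero])

theorem IsMonomialIdeal.containsLeadingMonomials (hI : IsMonomialIdeal x I)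
    (hx : IsPermutablyRegular x) : ContainsLeadingMonomials x I := by
  intro n p hp hpI e he
  by_contra heI
  have hcoeff : p.coeff e ≠ 0 := fun h => he (h ▸ zero_mem _)
  refine he (hx.mem_span_range_of_mul_mem_powSuccIdeal (e := e) ?_)
  rw [← sub_sub_cancel (MvPolynomial.eval x p) (p.coeff e * _)]
  exact sub_mem (hI.le_powSuccIdeal heI hpI)
    (eval_sub_coeff_mul_prod_pow_mem_powSuccIdeal x hp hcoeff)

theorem ContainsLeadingMonomials.colon (hI : ContainsLeadingMonomials x I) :
    ContainsLeadingMonomials x (I.colon (Set.range x)) := by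
  classical
  intro n p hp hpI e he
  rw [Submodule.mem_colon] at hpI ⊢
  rintro _ ⟨i, rfl⟩
  have hcoeff : (MvPolynomial.X i * p).coeff (Finsupp.single i 1 + e) ∉
      Ideal.span (Set.range x) := by rwa [MvPolynomial.coeff_X_mul]
  have heval : MvPolynomial.eval x (MvPolynomial.X i * p) ∈ I := by
    rw [map_mul, MvPolynomial.eval_X, mul_comm]
    exact hpI _ ⟨i, rfl⟩
  have h := hI _ _ ((MvPolynomial.isHomogeneous_X R i).mul hp) heval _ hcoeff
  rw [smul_eq_mul]
  simp only [Finsupp.coe_add, Pi.add_apply, pow_add, Finset.prod_mul_distrib] at h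
  simpa [Finsupp.single_apply, mul_comm] using h

theorem prod_pow_mem_span_range_pow (x : ι → R) (e : ι →₀ ℕ) :
    ∏ i, x i ^ e i ∈ Ideal.span (Set.range x) ^ e.degree := by
  rw [Finsupp.degree_eq_sum, ← Finset.prod_pow_eq_pow_sum]
  exact Ideal.prod_mem_prod fun i _ =>
    Ideal.pow_mem_pow (Ideal.subset_span (Set.mem_range_self i)) _

theorem ContainsLeadingMonomials.inf_pow_le (hI : ContainsLeadingMonomials x I) (n : ℕ) :
    I ⊓ Ideal.span (Set.range x) ^ n ≤
      Ideal.span ((fun e : ι → ℕ => ∏ i, x i ^ e i) '' {e | ∏ i, x i ^ e i ∈ I}) ⊔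
        Ideal.span (Set.range x) ^ (n + 1) := by
  rintro y ⟨hyI, hyn⟩
  obtain ⟨p, hp, rfl⟩ := (Ideal.mem_span_pow_iff_exists_isHomogeneous x y).mp hyn
  rw [MvPolynomial.eval_eq']
  refine sum_mem fun e he => ?_
  by_cases hcoeff : p.coeff e ∈ Ideal.span (Set.range x)
  · refine Ideal.mem_sup_right ?_
    rw [pow_succ',
      ← degree_eq_of_isHomogeneous_of_coeff_ne_zero hp (MvPolynomial.mem_support_iff.mp he)]
    exact Ideal.mul_mem_mul hcoeff (prod_pow_mem_span_range_pow x e)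
  · exact Ideal.mem_sup_left (Ideal.mul_mem_left _ _
      (Ideal.subset_span ⟨e, hI n p hp hyI e hcoeff, rfl⟩))

theorem ContainsLeadingMonomials.isMonomialIdeal [IsNoetherianRing R]
    (hI : ContainsLeadingMonomials x I) (hx : Ideal.span (Set.range x) ≤ Ring.jacobson R) :
    IsMonomialIdeal x I := by
  let J := Ideal.span ((fun e : ι → ℕ => ∏ i, x i ^ e i) '' {e | ∏ i, x i ^ e i ∈ I})
  have hJI : J ≤ I := Ideal.span_le.mpr (Set.image_subset_iff.mpr fun _ he => he)
  refine ⟨_, le_antisymm (le_of_forall_le_sup_pow hx fun n => ?_) hJI⟩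
  induction n with
  | zero => simp
  | succ n ih =>
    calc I = (J ⊔ Ideal.span (Set.range x) ^ n) ⊓ I := (inf_eq_right.mpr ih).symm
      _ = J ⊔ I ⊓ Ideal.span (Set.range x) ^ n := by rw [sup_inf_assoc_of_le _ hJI, inf_comm]
      _ ≤ J ⊔ Ideal.span (Set.range x) ^ (n + 1) := sup_le le_sup_left (hI.inf_pow_le n)

theorem IsMonomialIdeal.colon_span_range [IsNoetherianRing R] (hI : IsMonomialIdeal x I)
    (hx : IsPermutablyRegular x) (hjac : Ideal.span (Set.range x) ≤ Ring.jacobson R) :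
    IsMonomialIdeal x (I.colon (Ideal.span (Set.range x))) := by
  rw [Ideal.colon_span]
  exact (hI.containsLeadingMonomials hx).colon.isMonomialIdeal hjac

theorem IsMonomialIdeal.span_range_mul_le (hI : IsMonomialIdeal x I) {L : Ideal R}
    (h : ∀ (e : ι → ℕ) (i : ι), ∏ j, x j ^ e j ∈ I → x i * ∏ j, x j ^ e j ∈ L) :
    Ideal.span (Set.range x) * I ≤ L := by
  obtain ⟨E, rfl⟩ := hI
  rw [Ideal.span_mul_span', Ideal.span_le]
  rintro _ ⟨_, ⟨i, rfl⟩, _, ⟨e, he, rfl⟩, rfl⟩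
  exact h e i (Ideal.subset_span (Set.mem_image_of_mem _ he))

theorem monomial_burch_characterization_general [IsNoetherianRing R]
    (hx : IsPermutablyRegular x) (hjac : Ideal.span (Set.range x) ≤ Ring.jacobson R)
    (hI : IsMonomialIdeal x I) :
    (Ideal.span (Set.range x) * I ≠
        Ideal.span (Set.range x) * I.colon (Ideal.span (Set.range x))) ↔
      ∃ (e : ι → ℕ) (i : ι),
        (∏ j, x j ^ e j) ∈ I.colon (Ideal.span (Set.range x)) ∧
          x i * ∏ j, x j ^ e j ∉ Ideal.span (Set.range x) * I := by
  rw [← not_iff_not]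
  push Not
  constructor
  · intro heq e i he
    rw [heq]
    exact Ideal.mul_mem_mul (Ideal.subset_span (Set.mem_range_self i)) he
  · intro h
    exact le_antisymm (Ideal.mul_mono_right Ideal.le_colon)
      ((hI.colon_span_range hx hjac).span_range_mul_le h)

end MonomialIdeal

/-- Proposition 6.4: let `(R, m)` be a regular local ring of dimension `d` with regular system
of parameters `x₁, …, x_d`, and let `I` be a monomial ideal in the `xᵢ`. Then `I` is a Burch
ideal if and only if there exist a monomial `m' ∈ (I : m)` and an index `i` such that
`xᵢ m' ∉ mI`. -/
theorem monomial_burch_characterization {R : Type*} [CommRing R] [IsNoetherianRing R]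
    [IsLocalRing R] {d : ℕ} (x : Fin d → R)
    (hx : Ideal.span (Set.range x) = maximalIdeal R)
    (hdim : ringKrullDim R = (d : ℕ))
    (I : Ideal R)
    (hmono : ∃ E : Set (Fin d → ℕ), I = Ideal.span ((fun e => ∏ i, x i ^ e i) '' E)) :
    (maximalIdeal R * I ≠ maximalIdeal R * Submodule.colon I (maximalIdeal R)) ↔
      ∃ (e : Fin d → ℕ) (i : Fin d),
        (∏ j, x j ^ e j) ∈ Submodule.colon I (maximalIdeal R) ∧
          x i * ∏ j, x j ^ e j ∉ maximalIdeal R * I := by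
  have hsys : IsRegularSystemOfParameters x := ⟨hx, by rw [hdim, Nat.card_fin]⟩
  simpa only [hx] using monomial_burch_characterization_general hsys.isPermutablyRegular
    (hx.trans_le (ringJacobson_eq_maximalIdeal R).ge) hmono
end
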